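/- Let N ≥ 1 be an integer, R > 0, let a : [0,R] → ℝ be continuous and ψ : [0,R] → ℝ be continuous, nonnegative, and strictly positive on (0,R), and write w(r) = e^{a(r)}ψ(r)^{N−1}. Let λ > 0 and let u : [0,R] → ℝ be continuously differentiable with u ≥ 0 and u'(r) ≤ 0 for all r, and assume that for every r ∈ (0,R), e^{a(r)}ψ(r)^{N−1}u'(r) = −λ∫₀^r w(s)e^{u(s)} ds. Then for every p > 1 and every r ∈ (0,R): u(0) ≥ u(r), and there exists c ∈ (0,r) such that u(0) − u(r) ≤ λ r e^{−a(c)}ψ(c)^{1−N} (∫₀^R w(s)e^{p u(s)} ds)^{1/p} (∫₀^R w(s) ds)^{(p−1)/p}. -/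

import Mathlib

open MeasureTheory Real intervalIntegral

lemma memLp_aux (R : ℝ) (f : ℝ → ℝ) (hf : ContinuousOn f (Set.Icc 0 R)) (q : ENNReal) :
    MemLp f q (volume.restrict (Set.Ioc 0 R)) := by
  obtain ⟨C, hC⟩ := isCompact_Icc.exists_bound_of_continuousOn hf
  refine MemLp.of_bound ((hf.mono Set.Ioc_subset_Icc_self).aestronglyMeasurable
    measurableSet_Ioc) C ?_
  filter_upwards [ae_restrict_mem measurableSet_Ioc] with x hx
  exact hC x (Set.Ioc_subset_Icc_self hx)

lemma holder_aux (R : ℝ) (hR : 0 < R) (w u : ℝ → ℝ) (hw : ContinuousOn w (Set.Icc 0 R))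
    (hw0 : ∀ r ∈ Set.Icc (0:ℝ) R, 0 ≤ w r) (hu : Continuous u) (p : ℝ) (hp : 1 < p) :
    ∫ s in (0:ℝ)..R, w s * exp (u s) ≤
      (∫ s in (0:ℝ)..R, w s * exp (p * u s)) ^ (1/p) * (∫ s in (0:ℝ)..R, w s) ^ ((p-1)/p) := by
  have hp0 : 0 < p := by linarith
  have hp1 : 0 < p - 1 := by linarith
  have hpq : p.HolderConjugate (p / (p-1)) := by
    rw [Real.holderConjugate_iff]
    refine ⟨hp, ?_⟩
    field_simp
    ring
  have hq : 1 / (p / (p-1)) = (p-1)/p := by field_simp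
  have key := integral_mul_le_Lp_mul_Lq_of_nonneg (μ := volume.restrict (Set.Ioc 0 R)) hpq
    (f := fun s => w s ^ (1/p) * exp (u s)) (g := fun s => w s ^ ((p-1)/p))
    (by
      filter_upwards [ae_restrict_mem measurableSet_Ioc] with x hx
      have := hw0 x (Set.Ioc_subset_Icc_self hx)
      simp only [Pi.zero_apply]; positivity)
    (by
      filter_upwards [ae_restrict_mem measurableSet_Ioc] with x hx
      have := hw0 x (Set.Ioc_subset_Icc_self hx)
      simp only [Pi.zero_apply]; positivity)
    (memLp_aux R _ ((hw.rpow_const (fun x _ => Or.inr (by positivity))).mul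
      (Real.continuous_exp.comp hu).continuousOn) _)
    (memLp_aux R _ (hw.rpow_const (fun x _ => Or.inr (by positivity))) _)
  rw [hq] at key
  simp only [intervalIntegral.integral_of_le hR.le]
  have e1 : ∫ s in Set.Ioc 0 R, w s * exp (u s) =
      ∫ s in Set.Ioc 0 R, (w s ^ (1/p) * exp (u s)) * w s ^ ((p-1)/p) := by
    refine setIntegral_congr_fun measurableSet_Ioc fun x hx => ?_
    have h0 := hw0 x (Set.Ioc_subset_Icc_self hx)
    have : w x ^ (1/p) * w x ^ ((p-1)/p) = w x := by
      rw [← Real.rpow_add_of_nonneg h0 (by positivity) (by positivity)]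
      have : 1/p + (p-1)/p = 1 := by field_simp; ring
      rw [this, Real.rpow_one]
    linear_combination (-exp (u x)) * this
  have e2 : ∫ s in Set.Ioc 0 R, w s * exp (p * u s) =
      ∫ s in Set.Ioc 0 R, (w s ^ (1/p) * exp (u s)) ^ p := by
    refine setIntegral_congr_fun measurableSet_Ioc fun x hx => ?_
    have h0 := hw0 x (Set.Ioc_subset_Icc_self hx)
    rw [Real.mul_rpow (by positivity) (by positivity), ← Real.rpow_mul h0, ← Real.exp_mul,
      one_div_mul_cancel hp0.ne', Real.rpow_one, mul_comm p]
  have e3 : ∫ s in Set.Ioc 0 R, w s =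
      ∫ s in Set.Ioc 0 R, (w s ^ ((p-1)/p)) ^ (p/(p-1)) := by
    refine setIntegral_congr_fun measurableSet_Ioc fun x hx => ?_
    have h0 := hw0 x (Set.Ioc_subset_Icc_self hx)
    rw [← Real.rpow_mul h0]
    have : (p-1)/p * (p/(p-1)) = 1 := by field_simp
    rw [this, Real.rpow_one]
  rw [e1, e2, e3]
  exact key

theorem radial_gelfand_oscillation_bound
    (N : ℕ) (hN : 1 ≤ N) (R : ℝ) (hR : 0 < R)
    (a ψ : ℝ → ℝ) (ha : ContinuousOn a (Set.Icc 0 R))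
    (hψ : ContinuousOn ψ (Set.Icc 0 R)) (hψ0 : ∀ r ∈ Set.Icc (0:ℝ) R, 0 ≤ ψ r)
    (hψpos : ∀ r ∈ Set.Ioo (0:ℝ) R, 0 < ψ r)
    (w : ℝ → ℝ) (hw : ∀ r, w r = exp (a r) * ψ r ^ (N - 1))
    (lam : ℝ) (hlam : 0 < lam)
    (u : ℝ → ℝ) (hu : ContDiff ℝ 1 u)
    (hu0 : ∀ r ∈ Set.Icc (0:ℝ) R, 0 ≤ u r)
    (hu' : ∀ r ∈ Set.Icc (0:ℝ) R, deriv u r ≤ 0)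
    (heq : ∀ r ∈ Set.Ioo (0:ℝ) R,
      exp (a r) * ψ r ^ (N - 1) * deriv u r =
        -lam * ∫ s in (0:ℝ)..r, w s * exp (u s)) :
    ∀ p : ℝ, 1 < p → ∀ r ∈ Set.Ioo (0:ℝ) R,
      u r ≤ u 0 ∧ ∃ c ∈ Set.Ioo (0:ℝ) r,
        u 0 - u r ≤ lam * r * exp (-(a c)) * ψ c ^ ((1:ℤ) - (N:ℤ)) *
          (∫ s in (0:ℝ)..R, w s * exp (p * u s)) ^ (1/p) *
          (∫ s in (0:ℝ)..R, w s) ^ ((p-1)/p) := by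
  intro p hp r hr
  have hd : Differentiable ℝ u := hu.differentiable (by norm_num)
  obtain ⟨c, hc, hcs⟩ := exists_deriv_eq_slope u hr.1 hd.continuous.continuousOn
    hd.differentiableOn
  have hcR : c ∈ Set.Ioo (0:ℝ) R := ⟨hc.1, hc.2.trans hr.2⟩
  have hr0 : 0 < r := hr.1
  have hdiff : u 0 - u r = r * (- deriv u c) := by
    rw [hcs, sub_zero]; field_simp; ring
  have hdc := hu' c (Set.Ioo_subset_Icc_self hcR)
  refine ⟨by nlinarith, c, hc, ?_⟩
  have hwc : ContinuousOn w (Set.Icc 0 R) := by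
    have : w = fun r => exp (a r) * ψ r ^ (N - 1) := funext hw
    rw [this]
    exact (Real.continuous_exp.comp_continuousOn ha).mul (hψ.pow _)
  have hw0 : ∀ r ∈ Set.Icc (0:ℝ) R, 0 ≤ w r := fun x hx => by
    have := hψ0 x hx
    rw [hw]; positivity
  have H := holder_aux R hR w u hwc hw0 hd.continuous p hp
  have hmono : ∫ s in (0:ℝ)..c, w s * exp (u s) ≤ ∫ s in (0:ℝ)..R, w s * exp (u s) := by
    refine intervalIntegral.integral_mono_interval le_rfl hcR.1.le hcR.2.le ?_ ?_
    · filter_upwards [ae_restrict_mem measurableSet_Ioc] with x hx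
      have := hw0 x (Set.Ioc_subset_Icc_self hx)
      simp only [Pi.zero_apply]; positivity
    · refine ContinuousOn.intervalIntegrable ?_
      rw [Set.uIcc_of_le hR.le]
      exact hwc.mul (Real.continuous_exp.comp hd.continuous).continuousOn
  have hψc := hψpos c hcR
  have hz : ψ c ^ ((1:ℤ) - (N:ℤ)) = (ψ c ^ (N-1))⁻¹ := by
    rw [← zpow_natCast, ← zpow_neg]
    congr 1
    push_cast [hN]
    ring
  have e := heq c hcR
  have hder : - deriv u c = lam * exp (-(a c)) * ψ c ^ ((1:ℤ) - (N:ℤ)) *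
      ∫ s in (0:ℝ)..c, w s * exp (u s) := by
    rw [hz, Real.exp_neg]
    have := Real.exp_pos (a c)
    field_simp
    linarith
  have hK : 0 ≤ lam * r * exp (-(a c)) * ψ c ^ ((1:ℤ) - (N:ℤ)) := by positivity
  have := mul_le_mul_of_nonneg_left (hmono.trans H) hK
  rw [hdiff, hder]
  linarith
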